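/- Let Σ be a set, → a binary relation on Σ, P a partition of Σ and S ⊆ Σ. Then the partition induced by the least Moore family containing all P-saturated sets together with pre_→(S) equals the split of P by pre_→(S): pr(M(pad(P) ∪ {pre_→(S)})) = split(pre_→(S), P). -/

import Mathlib

universe u v

variable {X : Type u} {A : Type v}

/-- A Moore family: a collection of subsets closed under arbitrary intersections. -/
def IsMoore (M : Set (Set X)) : Prop := ∀ S ⊆ M, ⋂₀ S ∈ M

/-- The least Moore family containing `C`. -/
def mClose (C : Set (Set X)) : Set (Set X) := ⋂₀ {M | IsMoore M ∧ C ⊆ M}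

/-- A disjunctive Moore family: additionally closed under arbitrary unions. -/
def IsDisjMoore (M : Set (Set X)) : Prop := IsMoore M ∧ ∀ S ⊆ M, ⋃₀ S ∈ M

/-- The least disjunctive Moore family containing `C`. -/
def dClose (C : Set (Set X)) : Set (Set X) := ⋂₀ {M | IsDisjMoore M ∧ C ⊆ M}

/-- The closure operator associated with a Moore family. -/
def mu (M : Set (Set X)) (S : Set X) : Set X := ⋂₀ {T | T ∈ M ∧ S ⊆ T}

/-- The partition (as a setoid) induced by a Moore family:
`s ≡ s'` iff `μ {s} = μ {s'}`. -/
def prS (M : Set (Set X)) : Setoid X :=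
  ⟨fun s t => mu M {s} = mu M {t}, ⟨fun _ => rfl, Eq.symm, Eq.trans⟩⟩

/-- The Moore family of all `P`-saturated sets (unions of blocks of `P`). -/
def padS (P : Setoid X) : Set (Set X) := {S | ∀ s ∈ S, ∀ t, P.r s t → t ∈ S}

/-- `P` refines `Q`: every block of `P` is contained in a block of `Q`. -/
def refines (P Q : Setoid X) : Prop := ∀ s t, P.r s t → Q.r s t

/-- A finitary operation on `℘(X)`: an arity `n` together with a map `℘(X)^n → ℘(X)`. -/
abbrev Op (X : Type u) := (n : ℕ) × ((Fin n → Set X) → Set X)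

/-- The image `F(S)` of a set of operations on a collection of subsets. -/
def imageF (F : Set (Op X)) (S : Set (Set X)) : Set (Set X) :=
  {T | ∃ f ∈ F, ∃ args : Fin f.1 → Set X, (∀ i, args i ∈ S) ∧ T = f.2 args}

/-- Forward `F`-completeness: `F(S) ⊆ S`. -/
def FComplete (F : Set (Op X)) (S : Set (Set X)) : Prop := imageF F S ⊆ S

/-- The forward `F`-complete shell: the least forward `F`-complete Moore family
containing `M`. -/
def shellF (F : Set (Op X)) (M : Set (Set X)) : Set (Set X) :=
  ⋂₀ {B | IsMoore B ∧ FComplete F B ∧ M ⊆ B}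

/-- Predecessor operator of a transition relation. -/
def preR (r : X → X → Prop) (S : Set X) : Set X := {s | ∃ t ∈ S, r s t}

/-- The split of a partition `P` by a set `T`: blocks are the nonempty sets
among `B ∩ T` and `B \ T` for blocks `B` of `P`. -/
def splitS (T : Set X) (P : Setoid X) : Setoid X :=
  ⟨fun s t => P.r s t ∧ (s ∈ T ↔ t ∈ T),
   ⟨fun s => ⟨P.iseqv.refl s, Iff.rfl⟩,
    fun h => ⟨P.iseqv.symm h.1, h.2.symm⟩,
    fun h1 h2 => ⟨P.iseqv.trans h1.1 h2.1, h1.2.trans h2.2⟩⟩⟩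

/-- Abstract refinement: `refine_f^A(S, a) = α(M(γ(a) ∪ {f(S)}))`. -/
def refineA [Preorder A] (al : Set (Set X) → A) (ga : A → Set (Set X))
    (f : Op X) (S : Fin f.1 → Set X) (a : A) : A :=
  al (mClose (ga a ∪ {f.2 S}))

/-- Abstract refiners: tuples in `γ(a)^n` whose refinement is strictly below `a`. -/
def refinersA [Preorder A] (al : Set (Set X) → A) (ga : A → Set (Set X))
    (f : Op X) (a : A) : Set (Fin f.1 → Set X) :=
  {S | (∀ i, S i ∈ ga a) ∧ refineA al ga f S a < a}

/-- One step of the GPT algorithm: refine by some refiner of some `f ∈ F`. -/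
def StepA [Preorder A] (F : Set (Op X)) (al : Set (Set X) → A) (ga : A → Set (Set X))
    (a b : A) : Prop :=
  ∃ f ∈ F, ∃ S : Fin f.1 → Set X, S ∈ refinersA al ga f a ∧ b = refineA al ga f S a

/-- The setoid induced by a collection of sets: `s ≡ t` iff no set of the
collection separates them. -/
def indSetoid (C : Set (Set X)) : Setoid X :=
  ⟨fun s t => ∀ T ∈ C, (s ∈ T ↔ t ∈ T),
   ⟨fun _ _ _ => Iff.rfl, fun h T hT => (h T hT).symm,
    fun h1 h2 T hT => (h1 T hT).trans (h2 T hT)⟩⟩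

/-- The block of `P` containing `s`. -/
def blockOf (P : Setoid X) (s : X) : Set X := {t | P.r s t}

/-- The existential-until operator `EU(S₁, S₂)`. -/
def EUset (r : X → X → Prop) (S1 S2 : Set X) : Set X :=
  S2 ∪ {s | s ∈ S1 ∧ ∃ (n : ℕ) (p : ℕ → X), p 0 = s ∧
    (∀ i < n, p i ∈ S1 ∧ r (p i) (p (i+1))) ∧ p n ∈ S2}

/-!
Both sides are equivalence relations `s ≡ t` of the form "no set of a given collection separates
`s` from `t`", that is, `indSetoid` of a collection. Sending a collection to this relation is
adjoint to `padS`: no set of `C` separates `Q`-equivalent points iff `C ⊆ padS Q`. As `padS Q` is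
a Moore family, closing `C` under intersections does not change the relation, and by
adjunction unions of collections become infima of equivalence relations.
-/

theorem mu_subset_mu_iff {M : Set (Set X)} {S T : Set X} :
    mu M S ⊆ mu M T ↔ ∀ U ∈ M, T ⊆ U → S ⊆ U :=
  ⟨fun h _ hU hTU => (Set.subset_sInter fun _ hV => hV.2).trans
      (h.trans (Set.sInter_subset_of_mem ⟨hU, hTU⟩)),
    fun h => Set.sInter_subset_sInter fun U hU => ⟨hU.1, h U hU.1 hU.2⟩⟩

theorem prS_eq_indSetoid (M : Set (Set X)) : prS M = indSetoid M := by
  ext s t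
  calc mu M {s} = mu M {t}
      ↔ mu M {s} ⊆ mu M {t} ∧ mu M {t} ⊆ mu M {s} := Set.Subset.antisymm_iff
    _ ↔ (∀ T ∈ M, t ∈ T → s ∈ T) ∧ ∀ T ∈ M, s ∈ T → t ∈ T := by
      simp only [mu_subset_mu_iff, Set.singleton_subset_iff]
    _ ↔ ∀ T ∈ M, (s ∈ T ↔ t ∈ T) := by grind

theorem isMoore_padS (P : Setoid X) : IsMoore (padS P) :=
  fun _ hC s hs t hst T hT => hC hT s (hs T hT) t hst

theorem blockOf_mem_padS (P : Setoid X) (s : X) : blockOf P s ∈ padS P :=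
  fun _ hst _ htu => P.trans hst htu

theorem subset_mClose (C : Set (Set X)) : C ⊆ mClose C :=
  Set.subset_sInter fun _ hM => hM.2

theorem IsMoore.mClose_subset_iff {M C : Set (Set X)} (hM : IsMoore M) :
    mClose C ⊆ M ↔ C ⊆ M :=
  ⟨(subset_mClose C).trans, fun h => Set.sInter_subset_of_mem ⟨hM, h⟩⟩

theorem le_indSetoid_iff {P : Setoid X} {C : Set (Set X)} :
    P ≤ indSetoid C ↔ C ⊆ padS P :=
  ⟨fun h T hT _ hs _ hst => (h hst T hT).1 hs,
    fun h _ _ hst _ hT => ⟨fun hs => h hT _ hs _ hst, fun ht => h hT _ ht _ (P.symm hst)⟩⟩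

theorem indSetoid_mClose (C : Set (Set X)) : indSetoid (mClose C) = indSetoid C :=
  eq_of_forall_le_iff fun P => by
    rw [le_indSetoid_iff, le_indSetoid_iff, (isMoore_padS P).mClose_subset_iff]

theorem indSetoid_union (C D : Set (Set X)) :
    indSetoid (C ∪ D) = indSetoid C ⊓ indSetoid D :=
  eq_of_forall_le_iff fun P => by
    simp only [le_inf_iff, le_indSetoid_iff, Set.union_subset_iff]

theorem indSetoid_padS (P : Setoid X) : indSetoid (padS P) = P :=
  le_antisymm (fun s _ h => (h _ (blockOf_mem_padS P s)).1 (P.refl s))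
    (le_indSetoid_iff.2 subset_rfl)

theorem splitS_eq_inf (T : Set X) (P : Setoid X) : splitS T P = P ⊓ indSetoid {T} := by
  ext s t
  exact and_congr_right fun _ => (forall_eq (p := fun U : Set X => s ∈ U ↔ t ∈ U)).symm

theorem stmt4_general (P : Setoid X) (T : Set X) :
    prS (mClose (padS P ∪ {T})) = splitS T P := by
  rw [prS_eq_indSetoid, indSetoid_mClose, indSetoid_union, indSetoid_padS, splitS_eq_inf]

theorem stmt4 (r : X → X → Prop) (P : Setoid X) (S : Set X) :
    prS (mClose (padS P ∪ {preR r S})) = splitS (preR r S) P :=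
  stmt4_general P (preR r S)
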